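/- Let p be an odd prime. Let b₁ = diag(p⁻¹,1,1,1,p) and b₂ = diag(1,p⁻¹,1,p,1), which lie in G. Let Rep = {0,1,…,p−1} ⊂ ℤ_p be the standard residue representatives, and set N₁ = {n(x₁,x₂,x₃,0) : x₁,x₂,x₃ ∈ Rep}, N₂ = {n(x₁,0,0,x₄) : x₁,x₄ ∈ Rep}, N₃ = {n(0,0,x₃,0) : x₃ ∈ Rep}. Then the double coset K·b₁·K is the union of the left cosets K·b₁·n for n ∈ N₁, K·b₂·n for n ∈ N₂, K·b₂⁻¹·n for n ∈ N₃, and K·b₁⁻¹; moreover these p³ + p² + p + 1 left cosets are pairwise disjoint. -/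

import Mathlib

/-!
The left cosets in `K b₁ K` are classified by the `𝔽_p`-points of the quadric defined by `J`. For
`k ∈ K`, the coset `K b₁ k` determines, and is determined by, the line spanned mod `p` by the first
row of `k` (`row_of_coset`, `coset_of_row`). The second direction amounts to the integrality of
`b₁ h b₁⁻¹` when the first row of `h ∈ K` is a multiple of `(1,0,0,0,0)` mod `p`; this follows from
the orthogonality relations among the rows of `h` (`conj_b1`).

The first row of `k` is isotropic, so its line is one of the `p³ + p² + p + 1` lines spanned by the
vectors `(1,-x₃,-x₂,-x₁,*)`, `(0,1,-x₄,*,x₁)`, `(0,0,0,1,x₃)` and `(0,0,0,0,1)`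
(`vec_exists`, `vec_unique`). Each of `b₂`, `b₂⁻¹`, `b₁⁻¹` is `w b₁ w` for an involution `w ∈ K`, so
every representative has the form `w b₁ (w n)`, and the first row of `w n` is exactly the vector
above with the same parameters (`wI_mul_nI`). Hence the representatives correspond one to one to the
lines.
-/

open Matrix

noncomputable section

variable (p : ℕ) [Fact p.Prime]

/-- The 5×5 matrix `J` over `ℚ_p`. -/
def J5 : Matrix (Fin 5) (Fin 5) ℚ_[p] :=
  Matrix.of fun i j => if (i : ℕ) + (j : ℕ) = 4 then 1 else 0

/-- The maximal compact subgroup `K = SO(3,2;ℤ_p)` of `G`. -/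
def Kgp : Set (Matrix (Fin 5) (Fin 5) ℚ_[p]) :=
  {g | gᵀ * J5 p * g = J5 p ∧ g.det = 1 ∧ ∀ i j, ‖g i j‖ ≤ 1}

/-- Standard residue representatives `{0, 1, …, p−1} ⊆ ℤ_p ⊆ ℚ_p`. -/
def ResRep : Set ℚ_[p] := {x | ∃ m : ℕ, m < p ∧ x = (m : ℚ_[p])}

/-- The unipotent matrix `n(x₁,x₂,x₃,x₄)`. -/
def nmat (x₁ x₂ x₃ x₄ : ℚ_[p]) : Matrix (Fin 5) (Fin 5) ℚ_[p] :=
  !![1, -x₃, x₃*x₄ - x₂, -(x₂*x₄) + x₃*x₄^2/2 - x₁, -(x₁*x₃) - x₂^2/2;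
     0, 1, -x₄, -(x₄^2)/2, x₁;
     0, 0, 1, x₄, x₂;
     0, 0, 0, 1, x₃;
     0, 0, 0, 0, 1]

def b1 : Matrix (Fin 5) (Fin 5) ℚ_[p] :=
  Matrix.diagonal ![((p : ℚ_[p]))⁻¹, 1, 1, 1, (p : ℚ_[p])]

def b2 : Matrix (Fin 5) (Fin 5) ℚ_[p] :=
  Matrix.diagonal ![1, ((p : ℚ_[p]))⁻¹, 1, (p : ℚ_[p]), 1]

def N1 : Set (Matrix (Fin 5) (Fin 5) ℚ_[p]) :=
  {n | ∃ x₁ ∈ ResRep p, ∃ x₂ ∈ ResRep p, ∃ x₃ ∈ ResRep p, n = nmat p x₁ x₂ x₃ 0}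

def N2 : Set (Matrix (Fin 5) (Fin 5) ℚ_[p]) :=
  {n | ∃ x₁ ∈ ResRep p, ∃ x₄ ∈ ResRep p, n = nmat p x₁ 0 0 x₄}

def N3 : Set (Matrix (Fin 5) (Fin 5) ℚ_[p]) :=
  {n | ∃ x₃ ∈ ResRep p, n = nmat p 0 0 x₃ 0}

/-- The set of representatives `b₁·n (n ∈ N₁)`, `b₂·n (n ∈ N₂)`, `b₂⁻¹·n (n ∈ N₃)`, `b₁⁻¹`. -/
def Reps : Set (Matrix (Fin 5) (Fin 5) ℚ_[p]) :=
  ((b1 p * ·) '' N1 p) ∪ ((b2 p * ·) '' N2 p) ∪ (((b2 p)⁻¹ * ·) '' N3 p) ∪ {(b1 p)⁻¹}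

/-- The left coset `K·m`. -/
def leftK (m : Matrix (Fin 5) (Fin 5) ℚ_[p]) : Set (Matrix (Fin 5) (Fin 5) ℚ_[p]) :=
  {x | ∃ k ∈ Kgp p, x = k * m}

/-! ### The group scheme `SO(J)` over a commutative ring -/

/-- The `5 × 5` matrices over `R`. -/
abbrev Mat (R : Type*) := Matrix (Fin 5) (Fin 5) R

/-- The matrix `J` over an arbitrary ring, given by its entries. -/
def JJ (R : Type*) [CommRing R] : Mat R :=
  !![0, 0, 0, 0, 1; 0, 0, 0, 1, 0; 0, 0, 1, 0, 0; 0, 1, 0, 0, 0; 1, 0, 0, 0, 0]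

/-- The special orthogonal group of the form `J`, as a set of matrices over `R`. The group `G` is
`SO ℚ_[p]` and `K` is the image of `SO ℤ_[p]`. -/
def SO (R : Type*) [CommRing R] : Set (Mat R) := {g | gᵀ * JJ R * g = JJ R ∧ g.det = 1}

section SO
variable {R : Type*} [CommRing R]

lemma JJ_mul_self : JJ R * JJ R = 1 := by
  ext i j; fin_cases i <;> fin_cases j <;> simp [JJ, Matrix.mul_apply, Fin.sum_univ_succ]

lemma JJ_transpose : (JJ R)ᵀ = JJ R := by
  ext i j; fin_cases i <;> fin_cases j <;> simp [JJ]

lemma SO_mul {g h : Mat R} (hg : g ∈ SO R) (hh : h ∈ SO R) : g * h ∈ SO R := by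
  refine ⟨?_, by rw [det_mul, hg.2, hh.2, one_mul]⟩
  calc (g * h)ᵀ * JJ R * (g * h) = hᵀ * (gᵀ * JJ R * g) * h := by
        rw [transpose_mul]; simp only [Matrix.mul_assoc]
    _ = JJ R := by rw [hg.1, hh.1]

lemma SO_mul_transpose {g : Mat R} (hg : g ∈ SO R) : g * JJ R * gᵀ = JJ R := by
  have h1 : (JJ R * gᵀ * JJ R) * g = 1 := by
    rw [Matrix.mul_assoc, Matrix.mul_assoc, ← Matrix.mul_assoc gᵀ, hg.1, JJ_mul_self]
  have h2 := mul_eq_one_comm.1 h1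
  calc g * JJ R * gᵀ = (g * (JJ R * gᵀ * JJ R)) * JJ R := by
        simp only [Matrix.mul_assoc, JJ_mul_self, Matrix.mul_one]
    _ = JJ R := by rw [h2, Matrix.one_mul]

lemma SO_inv {g : Mat R} (hg : g ∈ SO R) : ∃ h ∈ SO R, g * h = 1 ∧ h * g = 1 := by
  have h1 : (JJ R * gᵀ * JJ R) * g = 1 := by
    rw [Matrix.mul_assoc, Matrix.mul_assoc, ← Matrix.mul_assoc gᵀ, hg.1, JJ_mul_self]
  refine ⟨JJ R * gᵀ * JJ R, ⟨?_, ?_⟩, mul_eq_one_comm.1 h1, h1⟩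
  · simp only [transpose_mul, transpose_transpose, JJ_transpose]
    calc JJ R * (g * JJ R) * JJ R * (JJ R * gᵀ * JJ R)
        = JJ R * (g * (JJ R * (JJ R * JJ R)) * gᵀ) * JJ R := by simp only [Matrix.mul_assoc]
      _ = JJ R := by
        rw [JJ_mul_self, Matrix.mul_one, SO_mul_transpose hg, JJ_mul_self, Matrix.one_mul]
  · have := congrArg det h1
    rwa [det_mul, hg.2, mul_one, det_one] at this

/-- The value of the form `J` on row `i` and row `0` of an element of `SO`. For `i = 0` it says that
row `0` is isotropic. -/
lemma SO_rows {g : Mat R} (hg : g ∈ SO R) (i : Fin 5) :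
    g i 0 * g 0 4 + g i 1 * g 0 3 + g i 2 * g 0 2 + g i 3 * g 0 1 + g i 4 * g 0 0 =
      JJ R i 0 := by
  have := congrFun (congrFun (SO_mul_transpose hg) i) 0
  rw [← this]
  simp [JJ, Matrix.mul_apply, Fin.sum_univ_succ]
  ring

lemma SO_map {S : Type*} [CommRing S] (f : R →+* S) {g : Mat R} (hg : g ∈ SO R) :
    g.map f ∈ SO S := by
  have hJ : (JJ R).map f = JJ S := by
    ext i j; fin_cases i <;> fin_cases j <;> simp [JJ]
  refine ⟨?_, ?_⟩
  · rw [← hJ, ← Matrix.transpose_map, ← Matrix.map_mul, ← Matrix.map_mul, hg.1]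
  · have := f.map_det g
    rw [hg.2, map_one] at this
    exact this.symm

lemma SO_of_map {S : Type*} [CommRing S] (f : R →+* S) (hf : Function.Injective f) {g : Mat R}
    (hg : g.map f ∈ SO S) : g ∈ SO R := by
  have hJ : (JJ R).map f = JJ S := by
    ext i j; fin_cases i <;> fin_cases j <;> simp [JJ]
  refine ⟨?_, ?_⟩
  · apply Matrix.map_injective hf
    show (gᵀ * JJ R * g).map f = (JJ R).map f
    rw [Matrix.map_mul, Matrix.map_mul, Matrix.transpose_map, hJ]; exact hg.1
  · apply hf
    rw [f.map_det, map_one]; exact hg.2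

end SO

/-! ### Unipotent elements, Weyl elements and the lines they represent -/

section explicit
variable {R : Type*} [CommRing R]

/-- The matrix `n(x₁,x₂,x₃,x₄)` with `t` in the place of `1/2`, so that it makes sense over `ℤ_[p]`
and over the residue field. -/
def nR (t x₁ x₂ x₃ x₄ : R) : Mat R :=
  !![1, -x₃, x₃*x₄ - x₂, -(x₂*x₄) + x₃*x₄^2*t - x₁, -(x₁*x₃) - x₂^2*t;
     0, 1, -x₄, -(x₄^2)*t, x₁;
     0, 0, 1, x₄, x₂;
     0, 0, 0, 1, x₃;
     0, 0, 0, 0, 1]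

lemma nR_mem {t : R} (ht : 2 * t = 1) (x₁ x₂ x₃ x₄ : R) : nR t x₁ x₂ x₃ x₄ ∈ SO R := by
  refine ⟨?_, ?_⟩
  · ext i j
    fin_cases i <;> fin_cases j <;>
      simp [nR, JJ, Matrix.mul_apply, Fin.sum_univ_succ] <;>
      first
      | ring1
      | linear_combination (-x₂^2) * ht
      | linear_combination (-x₄^2) * ht
  · rw [Matrix.det_of_isUpperTriangular]
    · simp [nR, Fin.prod_univ_succ]
    · intro i j hij
      fin_cases i <;> fin_cases j <;> first | rfl | simp at hij

/-- The involution exchanging `e₁ ↔ e₂` and `e₄ ↔ e₅`; it conjugates `b₁` into `b₂`. -/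
def w2 (R : Type*) [CommRing R] : Mat R :=
  !![0, 1, 0, 0, 0; 1, 0, 0, 0, 0; 0, 0, 1, 0, 0; 0, 0, 0, 0, 1; 0, 0, 0, 1, 0]

/-- The involution exchanging `e₁ ↔ e₄` and `e₂ ↔ e₅`; it conjugates `b₁` into `b₂⁻¹`. -/
def w3 (R : Type*) [CommRing R] : Mat R :=
  !![0, 0, 0, 1, 0; 0, 0, 0, 0, 1; 0, 0, 1, 0, 0; 1, 0, 0, 0, 0; 0, 1, 0, 0, 0]

/-- The involution exchanging `e₁ ↔ e₅`, with the sign at `e₃` making the determinant `1`; it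
conjugates `b₁` into `b₁⁻¹`. -/
def w4 (R : Type*) [CommRing R] : Mat R :=
  !![0, 0, 0, 0, 1; 0, 1, 0, 0, 0; 0, 0, -1, 0, 0; 0, 0, 0, 1, 0; 1, 0, 0, 0, 0]

lemma w2_mem : w2 R ∈ SO R := by
  refine ⟨?_, ?_⟩
  · ext i j; fin_cases i <;> fin_cases j <;> simp [w2, JJ, Matrix.mul_apply, Fin.sum_univ_succ]
  · simp [w2, det_succ_row_zero, Fin.sum_univ_succ, Fin.succAbove]
lemma w3_mem : w3 R ∈ SO R := by
  refine ⟨?_, ?_⟩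
  · ext i j; fin_cases i <;> fin_cases j <;> simp [w3, JJ, Matrix.mul_apply, Fin.sum_univ_succ]
  · simp [w3, det_succ_row_zero, Fin.sum_univ_succ, Fin.succAbove]; ring
lemma w4_mem : w4 R ∈ SO R := by
  refine ⟨?_, ?_⟩
  · ext i j; fin_cases i <;> fin_cases j <;> simp [w4, JJ, Matrix.mul_apply, Fin.sum_univ_succ]
  · simp [w4, det_succ_row_zero, Fin.sum_univ_succ, Fin.succAbove]; ring

/-- The parameters of the four families of representatives. Over the residue field they index the
points of the projective quadric `2 r₁ r₅ + 2 r₂ r₄ + r₃² = 0`. -/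
abbrev Idx (R : Type*) := (R × R × R) ⊕ (R × R) ⊕ R ⊕ Unit

/-- The normalized isotropic vector (first nonzero coordinate `1`) with the given parameters;
`t` stands for `1/2`. -/
def lineVec (t : R) : Idx R → Fin 5 → R
  | .inl (x₁, x₂, x₃) => ![1, -x₃, -x₂, -x₁, -(x₁*x₃) - x₂^2*t]
  | .inr (.inl (x₁, x₄)) => ![0, 1, -x₄, -(x₄^2)*t, x₁]
  | .inr (.inr (.inl x₃)) => ![0, 0, 0, 1, x₃]
  | .inr (.inr (.inr _)) => ![0, 0, 0, 0, 1]

/-- The Weyl element attached to the family of an index. -/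
def wI : Idx R → Mat R
  | .inl _ => 1
  | .inr (.inl _) => w2 R
  | .inr (.inr (.inl _)) => w3 R
  | .inr (.inr (.inr _)) => w4 R

/-- The unipotent element attached to an index; `t` stands for `1/2`. -/
def nI (t : R) : Idx R → Mat R
  | .inl (x₁, x₂, x₃) => nR t x₁ x₂ x₃ 0
  | .inr (.inl (x₁, x₄)) => nR t x₁ 0 0 x₄
  | .inr (.inr (.inl x₃)) => nR t 0 0 x₃ 0
  | .inr (.inr (.inr _)) => nR t 0 0 0 0

lemma one_mem_SO : (1 : Mat R) ∈ SO R := by simp [SO]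

lemma wI_mem (i : Idx R) : wI i ∈ SO R := by
  rcases i with i | i | i | i
  exacts [one_mem_SO, w2_mem, w3_mem, w4_mem]

lemma wI_mul_self (i : Idx R) : wI i * wI i = 1 := by
  rcases i with i | i | i | i
  · exact Matrix.one_mul 1
  all_goals
    ext i j
    fin_cases i <;> fin_cases j <;>
      simp [wI, w2, w3, w4, Matrix.mul_apply, Fin.sum_univ_succ]

lemma nI_mem {t : R} (ht : 2 * t = 1) (i : Idx R) : nI t i ∈ SO R := by
  rcases i with ⟨x₁, x₂, x₃⟩ | ⟨x₁, x₄⟩ | x₃ | i <;> exact nR_mem ht _ _ _ _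

lemma wI_mul_nI (t : R) (i : Idx R) (j : Fin 5) : (wI i * nI t i) 0 j = lineVec t i j := by
  rcases i with ⟨x₁, x₂, x₃⟩ | ⟨x₁, x₄⟩ | x₃ | i <;> fin_cases j <;>
    simp [wI, nI, nR, w2, w3, w4, lineVec, Matrix.mul_apply, Fin.sum_univ_succ, Matrix.one_apply]

end explicit

section lines
variable {F : Type*} [Field F]

/-- Every isotropic vector is a multiple of one of the normalized ones. -/
lemma vec_exists {t : F} (ht : 2 * t = 1) (r : Fin 5 → F)
    (hr : 2 * r 0 * r 4 + 2 * r 1 * r 3 + r 2 ^ 2 = 0) :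
    ∃ (i : Idx F) (u : F), ∀ j, r j = u * lineVec t i j := by
  have h2 : (2 : F) ≠ 0 := left_ne_zero_of_mul_eq_one ht
  obtain rfl : t = 1 / 2 := by field_simp; linear_combination ht
  by_cases c0 : r 0 = 0
  swap
  · refine ⟨.inl (-r 3 / r 0, -r 2 / r 0, -r 1 / r 0), r 0, fun j => ?_⟩
    fin_cases j <;> simp [lineVec] <;> field_simp
    linear_combination hr
  by_cases c1 : r 1 = 0
  swap
  · refine ⟨.inr (.inl (r 4 / r 1, -r 2 / r 1)), r 1, fun j => ?_⟩
    fin_cases j <;> simp [lineVec, c0] <;> field_simp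
    rw [c0] at hr
    linear_combination hr
  have c2 : r 2 = 0 := by simpa [c0, c1] using hr
  by_cases c3 : r 3 = 0
  swap
  · refine ⟨.inr (.inr (.inl (r 4 / r 3))), r 3, fun j => ?_⟩
    fin_cases j <;> simp [lineVec, c0, c1, c2]
    field_simp
  · refine ⟨.inr (.inr (.inr ())), r 4, fun j => ?_⟩
    fin_cases j <;> simp [lineVec, c0, c1, c2, c3]

/-- Distinct normalized vectors span distinct lines: the first nonzero coordinate is `1`, and the
parameters of a family occur among the other coordinates up to sign. -/
lemma vec_unique {t : F} {i j : Idx F} {u : F}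
    (h : ∀ l, lineVec t i l = u * lineVec t j l) : i = j := by
  have h0 := h 0
  have h1 := h 1
  have h2 := h 2
  have h3 := h 3
  have h4 := h 4
  rcases i with ⟨x₁, x₂, x₃⟩ | ⟨x₁, x₄⟩ | x₃ | ⟨⟩ <;>
  rcases j with ⟨y₁, y₂, y₃⟩ | ⟨y₁, y₄⟩ | y₃ | ⟨⟩ <;>
  simp [lineVec] at h0 h1 h2 h3 h4 <;> grind
end lines

/-! ### Integral matrices and conjugation by `b₁` -/

section padic

/-- Base change of matrices along `ℤ_[p] → ℚ_[p]`. -/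
def toQ (g : Mat ℤ_[p]) : Mat ℚ_[p] := g.map (PadicInt.Coe.ringHom (p := p))

lemma toQ_apply (g : Mat ℤ_[p]) (i j : Fin 5) : toQ p g i j = (g i j : ℚ_[p]) := rfl

lemma toQ_mul (g h : Mat ℤ_[p]) : toQ p (g * h) = toQ p g * toQ p h := Matrix.map_mul

lemma toQ_one : toQ p 1 = 1 := Matrix.map_one _ (map_zero _) (map_one _)

lemma J5_eq : J5 p = JJ ℚ_[p] := by
  ext i j; fin_cases i <;> fin_cases j <;> simp [JJ, J5]

lemma mem_Kgp {g : Mat ℚ_[p]} : g ∈ Kgp p ↔ ∃ h ∈ SO ℤ_[p], g = toQ p h := by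
  constructor
  · rintro ⟨h1, h2, h3⟩
    refine ⟨Matrix.of fun i j => ⟨g i j, h3 i j⟩, ?_, rfl⟩
    apply SO_of_map (PadicInt.Coe.ringHom (p := p)) Subtype.coe_injective
    rw [J5_eq] at h1
    exact ⟨h1, h2⟩
  · rintro ⟨h, hh, rfl⟩
    have := SO_map (PadicInt.Coe.ringHom (p := p)) hh
    exact ⟨by rw [J5_eq]; exact this.1, this.2, fun i j => (h i j).2⟩

lemma p_ne : (p : ℚ_[p]) ≠ 0 := mod_cast (Fact.out : p.Prime).ne_zero

lemma b1_mem : b1 p ∈ SO ℚ_[p] := by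
  have := p_ne p
  refine ⟨?_, ?_⟩
  · ext i j; fin_cases i <;> fin_cases j <;>
      simp [b1, JJ, Matrix.mul_apply, Matrix.diagonal_apply, this]
  · simp [b1, Fin.prod_univ_succ, this]

lemma toZMod_eq_zero_iff (x : ℤ_[p]) : PadicInt.toZMod x = 0 ↔ (p : ℤ_[p]) ∣ x := by
  rw [← RingHom.mem_ker, PadicInt.ker_toZMod, IsLocalRing.mem_maximalIdeal,
    PadicInt.mem_nonunits, PadicInt.norm_lt_one_iff_dvd]

lemma exists_half (hp : p ≠ 2) : ∃ t : ℤ_[p], 2 * t = 1 := by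
  have : IsUnit (2 : ℤ_[p]) := by
    rw [PadicInt.isUnit_iff]
    have := (PadicInt.norm_natCast_eq_one_iff (p := p) (n := 2)).2
      ((Nat.coprime_primes Fact.out Nat.prime_two).2 hp)
    exact_mod_cast this
  exact this.exists_right_inv

/-- If row `0` of `h` vanishes mod `p` off the diagonal, then `b₁ h b₁⁻¹` is integral. Isotropy of
row `0` improves the last entry of the row to a multiple of `p²`, and orthogonality of the other rows
to row `0` makes the middle entries of the last column divisible by `p`. -/
lemma conj_b1 (hp : p ≠ 2) {h : Mat ℤ_[p]} (hh : h ∈ SO ℤ_[p])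
    (hd : ∀ j, j ≠ 0 → (p : ℤ_[p]) ∣ h 0 j) :
    ∃ κ ∈ SO ℤ_[p], b1 p * toQ p h = toQ p κ * b1 p := by
  have hpQ := p_ne p
  obtain ⟨t, ht⟩ := exists_half p hp
  -- otherwise `p` divides all of row `0`, which is impossible for an invertible matrix
  have hu : IsUnit (h 0 0) := by
    by_contra hc
    rw [PadicInt.not_isUnit_iff, PadicInt.norm_lt_one_iff_dvd] at hc
    have hall : ∀ j, (p : ℤ_[p]) ∣ h 0 j := fun j => by
      by_cases hj : j = 0
      · rwa [hj]
      · exact hd j hj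
    obtain ⟨g, -, hg, -⟩ := SO_inv hh
    have h1 : (h * g) 0 0 = 1 := by rw [hg]; simp
    have h2 : (p : ℤ_[p]) ∣ (h * g) 0 0 := by
      rw [Matrix.mul_apply]
      exact Finset.dvd_sum fun j _ => (hall j).mul_right _
    rw [h1] at h2
    exact PadicInt.p_nonunit (isUnit_of_dvd_one h2)
  obtain ⟨a1, e1⟩ := hd 1 (by decide)
  obtain ⟨a2, e2⟩ := hd 2 (by decide)
  obtain ⟨a3, e3⟩ := hd 3 (by decide)
  have hrow := SO_rows hh
  have e4 : (p : ℤ_[p]) ^ 2 ∣ h 0 4 := by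
    have h0 := hrow 0
    rw [e1, e2, e3] at h0
    simp [JJ] at h0
    rw [← hu.dvd_mul_left]
    exact ⟨-(t * (2 * (a1 * a3) + a2 ^ 2)), by
      linear_combination t * h0 - (h 0 0 * h 0 4) * ht⟩
  obtain ⟨c, e4⟩ := e4
  have col : ∀ i : Fin 5, JJ ℤ_[p] i 0 = 0 → (p : ℤ_[p]) ∣ h i 4 := by
    intro i hi
    have h0 := hrow i
    rw [e1, e2, e3, e4, hi] at h0
    rw [← hu.dvd_mul_right]
    exact ⟨-(h i 0 * p * c + h i 1 * a3 + h i 2 * a2 + h i 3 * a1), by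
      linear_combination h0⟩
  obtain ⟨f1, g1⟩ := col 1 rfl
  obtain ⟨f2, g2⟩ := col 2 rfl
  obtain ⟨f3, g3⟩ := col 3 rfl
  have key : b1 p * toQ p h = toQ p !![h 0 0, a1, a2, a3, c;
      p * h 1 0, h 1 1, h 1 2, h 1 3, f1;
      p * h 2 0, h 2 1, h 2 2, h 2 3, f2;
      p * h 3 0, h 3 1, h 3 2, h 3 3, f3;
      p ^ 2 * h 4 0, p * h 4 1, p * h 4 2, p * h 4 3, h 4 4] * b1 p := by
    ext i j
    rw [b1, Matrix.diagonal_mul, Matrix.mul_diagonal]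
    fin_cases i <;> fin_cases j <;>
      simp [toQ_apply, e1, e2, e3, e4, g1, g2, g3] <;> field_simp
  refine ⟨_, ?_, key⟩
  obtain ⟨b', hbi, hbb, -⟩ := SO_inv (b1_mem p)
  apply SO_of_map (PadicInt.Coe.ringHom (p := p)) Subtype.coe_injective
  have : toQ p !![h 0 0, a1, a2, a3, c;
      p * h 1 0, h 1 1, h 1 2, h 1 3, f1;
      p * h 2 0, h 2 1, h 2 2, h 2 3, f2;
      p * h 3 0, h 3 1, h 3 2, h 3 3, f3;
      p ^ 2 * h 4 0, p * h 4 1, p * h 4 2, p * h 4 3, h 4 4] = b1 p * toQ p h * b' := by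
    rw [key, Matrix.mul_assoc, hbb, Matrix.mul_one]
  change toQ p _ ∈ _
  rw [this]
  exact SO_mul (SO_mul (b1_mem p) (SO_map _ hh)) hbi

/-- The coset `K b₁ k` depends only on the line spanned by row `0` of `k` mod `p`. -/
lemma coset_of_row (hp : p ≠ 2) {k q : Mat ℤ_[p]} (hk : k ∈ SO ℤ_[p]) (hq : q ∈ SO ℤ_[p])
    (u : ℤ_[p]) (h : ∀ j, (p : ℤ_[p]) ∣ k 0 j - u * q 0 j) :
    ∃ κ ∈ SO ℤ_[p], b1 p * toQ p k = toQ p κ * (b1 p * toQ p q) := by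
  obtain ⟨q', hq', h1, h2⟩ := SO_inv hq
  obtain ⟨κ, hκ, e⟩ := conj_b1 p hp (SO_mul hk hq') (fun j hj => by
    have e1 : (q * q') 0 j = 0 := by rw [h1]; exact Matrix.one_apply_ne hj.symm
    have : (k * q') 0 j = ∑ l, (k 0 l - u * q 0 l) * q' l j := by
      simp only [sub_mul, Finset.sum_sub_distrib, mul_assoc, ← Finset.mul_sum]
      rw [← Matrix.mul_apply, ← Matrix.mul_apply, e1, mul_zero, sub_zero]
    rw [this]
    exact Finset.dvd_sum fun l _ => (h l).mul_right _)
  refine ⟨κ, hκ, ?_⟩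
  rw [← Matrix.mul_assoc, ← e, Matrix.mul_assoc, ← toQ_mul, Matrix.mul_assoc, h2, Matrix.mul_one]

/-- The coset `K b₁ k` determines the line spanned by row `0` of `k` mod `p`. -/
lemma row_of_coset {k q κ : Mat ℤ_[p]} (e : b1 p * toQ p k = toQ p κ * (b1 p * toQ p q))
    (j : Fin 5) : (p : ℤ_[p]) ∣ k 0 j - κ 0 0 * q 0 j := by
  have hpQ := p_ne p
  refine ⟨κ 0 1 * q 1 j + κ 0 2 * q 2 j + κ 0 3 * q 3 j + p * (κ 0 4 * q 4 j), ?_⟩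
  have h := congrFun (congrFun e 0) j
  rw [b1, Matrix.diagonal_mul, Matrix.mul_apply] at h
  simp [Fin.sum_univ_succ, Matrix.diagonal_mul, toQ_apply] at h
  apply Subtype.coe_injective
  push_cast
  field_simp at h
  linear_combination h

/-! ### The representatives -/

/-- Lifting of parameters along the standard residue representatives `{0, …, p - 1}`. -/
def liftIdx : Idx (ZMod p) → Idx ℤ_[p] :=
  Sum.map (Prod.map (fun x => (x.val : ℤ_[p])) (Prod.map (fun x => (x.val : ℤ_[p]))
    (fun x => (x.val : ℤ_[p])))) (Sum.map (Prod.map (fun x => (x.val : ℤ_[p]))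
    (fun x => (x.val : ℤ_[p]))) (Sum.map (fun x => (x.val : ℤ_[p])) id))

lemma toZMod_lineVec (t : ℤ_[p]) (i : Idx (ZMod p)) (j : Fin 5) :
    PadicInt.toZMod (lineVec t (liftIdx p i) j) = lineVec (PadicInt.toZMod t) i j := by
  rcases i with ⟨x₁, x₂, x₃⟩ | ⟨x₁, x₄⟩ | x₃ | i <;> fin_cases j <;>
    simp [liftIdx, lineVec]

/-- The representative with index `i`, written as `w b₁ (w n)` with `w` a Weyl involution. Row `0` of
`w n` is the normalized vector with index `i`. -/
def cosetRep (t : ℤ_[p]) (i : Idx (ZMod p)) : Mat ℚ_[p] :=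
  toQ p (wI (liftIdx p i)) * (b1 p * toQ p (wI (liftIdx p i) * nI t (liftIdx p i)))

lemma toQ_nR {t : ℤ_[p]} (ht : 2 * t = 1) (x₁ x₂ x₃ x₄ : ℤ_[p]) :
    toQ p (nR t x₁ x₂ x₃ x₄) = nmat p x₁ x₂ x₃ x₄ := by
  have hQ : (2 : ℚ_[p]) * t = 1 := by exact_mod_cast congrArg (fun x : ℤ_[p] => (x : ℚ_[p])) ht
  have : (t : ℚ_[p]) = 2⁻¹ := eq_inv_of_mul_eq_one_right hQ
  ext i j
  rw [toQ_apply]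
  fin_cases i <;> fin_cases j <;> simp [nR, nmat, this, div_eq_mul_inv]

lemma b1_inv : (b1 p)⁻¹ = Matrix.diagonal ![(p : ℚ_[p]), 1, 1, 1, (p : ℚ_[p])⁻¹] := by
  have := p_ne p
  apply Matrix.inv_eq_right_inv
  ext i j; fin_cases i <;> fin_cases j <;> simp [b1, this]

lemma b2_inv : (b2 p)⁻¹ = Matrix.diagonal ![1, (p : ℚ_[p]), 1, (p : ℚ_[p])⁻¹, 1] := by
  have := p_ne p
  apply Matrix.inv_eq_right_inv
  ext i j; fin_cases i <;> fin_cases j <;> simp [b2, this]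

lemma w2_conj : toQ p (w2 _) * b1 p * toQ p (w2 _) = b2 p := by
  ext i j; fin_cases i <;> fin_cases j <;>
    simp [b1, b2, w2, Matrix.mul_apply, Fin.sum_univ_succ, toQ_apply, Matrix.diagonal_apply]

lemma w3_conj : toQ p (w3 _) * b1 p * toQ p (w3 _) = (b2 p)⁻¹ := by
  rw [b2_inv]
  ext i j; fin_cases i <;> fin_cases j <;>
    simp [b1, w3, Matrix.mul_apply, Fin.sum_univ_succ, toQ_apply, Matrix.diagonal_apply]

lemma w4_conj : toQ p (w4 _) * b1 p * toQ p (w4 _) = (b1 p)⁻¹ := by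
  rw [b1_inv]
  ext i j; fin_cases i <;> fin_cases j <;>
    simp [b1, w4, Matrix.mul_apply, Fin.sum_univ_succ, toQ_apply, Matrix.diagonal_apply]

lemma nR_zero (t : ℤ_[p]) : nR t 0 0 0 0 = 1 := by
  ext i j; fin_cases i <;> fin_cases j <;> simp [nR]

lemma rep_eq (t : ℤ_[p]) (i : Idx (ZMod p)) : cosetRep p t i =
    (toQ p (wI (liftIdx p i)) * b1 p * toQ p (wI (liftIdx p i))) * toQ p (nI t (liftIdx p i)) := by
  rw [cosetRep, toQ_mul]; simp only [Matrix.mul_assoc]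

lemma rep_one {t : ℤ_[p]} (ht : 2 * t = 1) (x₁ x₂ x₃ : ZMod p) :
    cosetRep p t (.inl (x₁, x₂, x₃)) = b1 p * nmat p x₁.val x₂.val x₃.val 0 := by
  rw [rep_eq]
  simp [liftIdx, wI, nI, toQ_one, toQ_nR p ht, -ZMod.natCast_val]

lemma rep_two {t : ℤ_[p]} (ht : 2 * t = 1) (x₁ x₄ : ZMod p) :
    cosetRep p t (.inr (.inl (x₁, x₄))) = b2 p * nmat p x₁.val 0 0 x₄.val := by
  rw [rep_eq]
  simp [liftIdx, wI, nI, w2_conj, toQ_nR p ht, -ZMod.natCast_val]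

lemma rep_three {t : ℤ_[p]} (ht : 2 * t = 1) (x₃ : ZMod p) :
    cosetRep p t (.inr (.inr (.inl x₃))) = (b2 p)⁻¹ * nmat p 0 0 x₃.val 0 := by
  rw [rep_eq]
  simp [liftIdx, wI, nI, w3_conj, toQ_nR p ht, -ZMod.natCast_val]

lemma rep_four (t : ℤ_[p]) (x : Unit) : cosetRep p t (.inr (.inr (.inr x))) = (b1 p)⁻¹ := by
  rw [rep_eq]
  simp [liftIdx, wI, nI, w4_conj, nR_zero, toQ_one]

lemma mem_ResRep {x : ℚ_[p]} : x ∈ ResRep p ↔ ∃ a : ZMod p, x = (a.val : ℚ_[p]) := by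
  constructor
  · rintro ⟨m, hm, rfl⟩
    exact ⟨m, by rw [ZMod.val_natCast_of_lt hm]⟩
  · rintro ⟨a, rfl⟩
    exact ⟨a.val, a.val_lt, rfl⟩

lemma Reps_eq_range {t : ℤ_[p]} (ht : 2 * t = 1) : Reps p = Set.range (cosetRep p t) := by
  apply Set.Subset.antisymm
  · rintro m (((⟨n, ⟨x₁, h₁, x₂, h₂, x₃, h₃, rfl⟩, rfl⟩ | ⟨n, ⟨x₁, h₁, x₄, h₄, rfl⟩, rfl⟩) |
      ⟨n, ⟨x₃, h₃, rfl⟩, rfl⟩) | rfl)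
    · obtain ⟨a₁, rfl⟩ := (mem_ResRep p).1 h₁
      obtain ⟨a₂, rfl⟩ := (mem_ResRep p).1 h₂
      obtain ⟨a₃, rfl⟩ := (mem_ResRep p).1 h₃
      exact ⟨_, rep_one p ht a₁ a₂ a₃⟩
    · obtain ⟨a₁, rfl⟩ := (mem_ResRep p).1 h₁
      obtain ⟨a₄, rfl⟩ := (mem_ResRep p).1 h₄
      exact ⟨_, rep_two p ht a₁ a₄⟩
    · obtain ⟨a₃, rfl⟩ := (mem_ResRep p).1 h₃
      exact ⟨_, rep_three p ht a₃⟩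
    · exact ⟨_, rep_four p t ()⟩
  · have hm : ∀ a : ZMod p, (a.val : ℚ_[p]) ∈ ResRep p := fun a => (mem_ResRep p).2 ⟨a, rfl⟩
    rintro _ ⟨⟨x₁, x₂, x₃⟩ | ⟨x₁, x₄⟩ | x₃ | i, rfl⟩
    · rw [rep_one p ht]
      exact .inl (.inl (.inl ⟨_, ⟨_, hm _, _, hm _, _, hm _, rfl⟩, rfl⟩))
    · rw [rep_two p ht]
      exact .inl (.inl (.inr ⟨_, ⟨_, hm _, _, hm _, rfl⟩, rfl⟩))
    · rw [rep_three p ht]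
      exact .inl (.inr ⟨_, ⟨_, hm _, rfl⟩, rfl⟩)
    · rw [rep_four]
      exact .inr rfl

/-- Representatives in the same left coset have the same index. -/
lemma index_unique {t : ℤ_[p]} {i j : Idx (ZMod p)} {κ κ' : Mat ℤ_[p]} (hκ : κ ∈ SO ℤ_[p])
    (h : toQ p κ * cosetRep p t i = toQ p κ' * cosetRep p t j) : i = j := by
  obtain ⟨a, -, -, ha⟩ := SO_inv (SO_mul hκ (wI_mem (liftIdx p i)))
  have e : b1 p * toQ p (wI (liftIdx p i) * nI t (liftIdx p i)) =
      toQ p (a * (κ' * wI (liftIdx p j))) * (b1 p * toQ p (wI (liftIdx p j) * nI t (liftIdx p j))) := by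
    have h' := congrArg (toQ p a * ·) h
    simp only [cosetRep, ← Matrix.mul_assoc, ← toQ_mul] at h'
    simp only [← Matrix.mul_assoc] at ha ⊢
    rw [ha, toQ_one, Matrix.one_mul] at h'
    exact h'
  refine vec_unique (t := PadicInt.toZMod t)
    (u := PadicInt.toZMod ((a * (κ' * wI (liftIdx p j))) 0 0)) fun l => ?_
  have := (toZMod_eq_zero_iff p _).2 (row_of_coset p e l)
  rw [wI_mul_nI, wI_mul_nI, map_sub, map_mul, toZMod_lineVec, toZMod_lineVec, sub_eq_zero] at this
  exact this

/-- Every `b₁ k` with `k ∈ K` lies in the left coset of a representative. -/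
lemma index_exists (hp : p ≠ 2) {t : ℤ_[p]} (ht : 2 * t = 1) {k : Mat ℤ_[p]}
    (hk : k ∈ SO ℤ_[p]) :
    ∃ i, ∃ κ ∈ SO ℤ_[p], b1 p * toQ p k = toQ p κ * cosetRep p t i := by
  have ht' : 2 * PadicInt.toZMod t = 1 := by
    rw [← map_ofNat (PadicInt.toZMod (p := p)) 2, ← map_mul, ht, map_one]
  obtain ⟨i, u, hu⟩ := vec_exists ht' (fun j => PadicInt.toZMod (k 0 j)) (by
    have := congrArg (PadicInt.toZMod (p := p)) (SO_rows hk 0)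
    simp [JJ] at this
    linear_combination this)
  obtain ⟨v, rfl⟩ := ZMod.ringHom_surjective (PadicInt.toZMod (p := p)) u
  obtain ⟨κ, hκ, e⟩ := coset_of_row p hp hk (SO_mul (wI_mem (liftIdx p i)) (nI_mem ht (liftIdx p i))) v
    (fun j => by
      rw [← toZMod_eq_zero_iff, wI_mul_nI, map_sub, map_mul, toZMod_lineVec, hu, sub_self])
  refine ⟨i, κ * wI (liftIdx p i), SO_mul hκ (wI_mem _), ?_⟩
  rw [e, cosetRep, ← Matrix.mul_assoc (toQ p _) (toQ p _), ← toQ_mul, Matrix.mul_assoc κ,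
    wI_mul_self, Matrix.mul_one]

end padic

/-- the double coset `K·b₁·K` is the union of the listed
`p³ + p² + p + 1` left cosets, and these cosets are pairwise disjoint. -/
theorem stmt_5 (hp : p ≠ 2) :
    ({x | ∃ k₁ ∈ Kgp p, ∃ k₂ ∈ Kgp p, x = k₁ * b1 p * k₂} = ⋃ m ∈ Reps p, leftK p m)
    ∧ (∀ m ∈ Reps p, ∀ m' ∈ Reps p, m ≠ m' → Disjoint (leftK p m) (leftK p m'))
    ∧ (Reps p).ncard = p ^ 3 + p ^ 2 + p + 1 := by
  obtain ⟨t, ht⟩ := exists_half p hp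
  have hinj : Function.Injective (cosetRep p t) := fun i j hij =>
    index_unique p (κ := 1) (κ' := 1) one_mem_SO (by rw [hij])
  rw [Reps_eq_range p ht]
  refine ⟨?_, ?_, ?_⟩
  · ext x
    simp only [Set.mem_iUnion, Set.mem_range, leftK, Set.mem_ofPred_eq, exists_prop,
      exists_exists_eq_and]
    constructor
    · rintro ⟨k₁, h₁, k₂, h₂, rfl⟩
      obtain ⟨k₁, g₁, rfl⟩ := (mem_Kgp p).1 h₁
      obtain ⟨k₂, g₂, rfl⟩ := (mem_Kgp p).1 h₂
      obtain ⟨i, κ, hκ, e⟩ := index_exists p hp ht g₂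
      refine ⟨i, _, (mem_Kgp p).2 ⟨k₁ * κ, SO_mul g₁ hκ, rfl⟩, ?_⟩
      rw [Matrix.mul_assoc, e, toQ_mul, Matrix.mul_assoc]
    · rintro ⟨i, k, hk, rfl⟩
      obtain ⟨k, gk, rfl⟩ := (mem_Kgp p).1 hk
      refine ⟨_, (mem_Kgp p).2 ⟨k * wI (liftIdx p i), SO_mul gk (wI_mem _), rfl⟩, _,
        (mem_Kgp p).2 ⟨_, SO_mul (wI_mem (liftIdx p i)) (nI_mem ht (liftIdx p i)), rfl⟩, ?_⟩
      rw [cosetRep, toQ_mul p k]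
      simp only [Matrix.mul_assoc]
  · rintro _ ⟨i, rfl⟩ _ ⟨j, rfl⟩ hne
    rw [Set.disjoint_left]
    rintro x ⟨k, hk, rfl⟩ ⟨k', hk', e⟩
    obtain ⟨k, gk, rfl⟩ := (mem_Kgp p).1 hk
    obtain ⟨k', -, rfl⟩ := (mem_Kgp p).1 hk'
    exact hne (congrArg _ (index_unique p gk e))
  · rw [← Set.image_univ, Set.ncard_image_of_injective _ hinj, Set.ncard_univ,
      Nat.card_eq_fintype_card]
    simp [Idx, ZMod.card]
    ring

end
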